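/- arXiv:quant-ph/0510020 — 6 statements merged into one kernel-verified Lean document; each statement's English description precedes it below -/
import Mathlib

section
/- The following are equivalent: (i) for every s₀ ∈ ℝ³ with ‖s₀‖ ≤ 1, the reachable set R(s₀) equals the closed unit ball of ℝ³; (ii) the odd-ratio condition holds, i.e. c_x, c_y, c_z are all nonzero and there exist integers k₁, k₂, k₃ such that c_x·(2k₂+1) = c_y·(2k₁+1) and c_x·(2k₃+1) = c_z·(2k₁+1). -/
open Matrix Real

noncomputable section

/-- The matrix `A(t, s₀)` of the affine Bloch-vector dynamics. -/
def Amat (cx cy cz t : ℝ) (s : Fin 3 → ℝ) : Matrix (Fin 3) (Fin 3) ℝ :=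
  !![Real.sin (2*cy*t) * Real.sin (2*cz*t), -(s 2) * Real.sin (2*cy*t) * Real.cos (2*cz*t),
       s 1 * Real.cos (2*cy*t) * Real.sin (2*cz*t);
     s 2 * Real.sin (2*cx*t) * Real.cos (2*cz*t), Real.sin (2*cx*t) * Real.sin (2*cz*t),
       -(s 0) * Real.cos (2*cx*t) * Real.sin (2*cz*t);
     -(s 1) * Real.cos (2*cy*t) * Real.sin (2*cx*t), s 0 * Real.cos (2*cx*t) * Real.sin (2*cy*t),
       Real.sin (2*cx*t) * Real.sin (2*cy*t)]

/-- The inhomogeneous part `a(t, s₀)` of the affine Bloch-vector dynamics. -/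
def avec (cx cy cz t : ℝ) (s : Fin 3 → ℝ) : Fin 3 → ℝ :=
  ![s 0 * Real.cos (2*cy*t) * Real.cos (2*cz*t),
    s 1 * Real.cos (2*cx*t) * Real.cos (2*cz*t),
    s 2 * Real.cos (2*cx*t) * Real.cos (2*cy*t)]

/-- The odd-ratio condition on the interaction constants. -/
def OddRatio (cx cy cz : ℝ) : Prop :=
  cx ≠ 0 ∧ cy ≠ 0 ∧ cz ≠ 0 ∧
    ∃ k₁ k₂ k₃ : ℤ, cx * (2 * (k₂ : ℝ) + 1) = cy * (2 * (k₁ : ℝ) + 1) ∧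
      cx * (2 * (k₃ : ℝ) + 1) = cz * (2 * (k₁ : ℝ) + 1)

/-- The reachable set from Bloch vector `s₀`:
`R(s₀) = {A(t,s₀)p + a(t,s₀) : t ≥ 0, ‖p‖ ≤ 1}`. -/
def reach (cx cy cz : ℝ) (s₀ : EuclideanSpace ℝ (Fin 3)) : Set (EuclideanSpace ℝ (Fin 3)) :=
  {v | ∃ t ≥ (0:ℝ), ∃ p : EuclideanSpace ℝ (Fin 3), ‖p‖ ≤ 1 ∧
    (Amat cx cy cz t s₀).mulVec p + avec cx cy cz t s₀ = v}

/-!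
The vector `A p + a` is the Bloch vector of the first of two qubits, prepared in the product state
with Bloch vectors `s₀` and `p`, after they evolve under `exp (i t ∑ k, c_k σ_k ⊗ σ_k)`. The
observables `σ_j ⊗ 1` anticommute and square to one, and the expectations of such observables in
any state form a vector of norm at most one, so the reachable set always stays in the unit ball.

For `s₀ = 0` the map `p ↦ A p + a` is diagonal with entries `sin (2 c_k t) sin (2 c_l t)`. It
attains a unit vector without zero coordinates only if all these sines are `±1`, that is, if the
three cosines `cos (2 c_k t)` vanish simultaneously, and a common zero exists exactly under the
odd-ratio condition. Conversely, at a common zero `p ↦ A p + a` is a diagonal sign matrix for every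
`s₀`, hence maps the ball onto itself.
-/

open scoped Kronecker ComplexOrder

lemma sum_smul_mul_self_of_anticomm {ι K A : Type*} [Fintype ι] [DecidableEq ι] [Field K]
    [NeZero (2 : K)] [Ring A] [Algebra K A] {X : ι → A}
    (hX : ∀ i j, X i * X j + X j * X i = if i = j then 2 else 0) (u : ι → K) :
    (∑ i, u i • X i) * (∑ i, u i • X i) = (∑ i, u i ^ 2) • (1 : A) := by
  have symmetrized : (2 : K) • ((∑ i, u i • X i) * (∑ i, u i • X i)) =
      ∑ i, ∑ j, (u i * u j) • (X i * X j + X j * X i) := by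
    simp only [smul_add, Finset.sum_add_distrib, two_smul, Finset.sum_mul_sum, smul_mul_smul_comm]
    rw [add_right_inj, Finset.sum_comm]
    exact Finset.sum_congr rfl fun i _ ↦ Finset.sum_congr rfl fun j _ ↦ by rw [mul_comm (u i)]
  have diagonal : ∑ i, ∑ j, (u i * u j) • (X i * X j + X j * X i) =
      (2 : K) • (∑ i, u i ^ 2) • (1 : A) := by
    simp only [hX, smul_ite, smul_zero, Finset.sum_ite_eq, Finset.mem_univ, if_true,
      ← one_add_one_eq_two, smul_add, Finset.sum_add_distrib, ← Finset.sum_smul, ← sq]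
    module
  exact smul_right_injective A two_ne_zero (symmetrized.trans diagonal)

section States

variable {𝕜 n ι : Type*} [RCLike 𝕜] [Fintype n] {ρ : Matrix n n 𝕜}

lemma sq_re_trace_mul_le (hρ : ρ.PosSemidef) (hρ_trace : ρ.trace = 1) {N : Matrix n n 𝕜}
    (hN : N.IsHermitian) :
    RCLike.re (N * ρ).trace ^ 2 ≤ RCLike.re (N * N * ρ).trace := by
  classical
  set e : ℝ := RCLike.re (N * ρ).trace with he
  have centered : (N - e • 1)ᴴ = N - e • 1 := by
    simp [hN.eq]
  have variance_nonneg := (RCLike.nonneg_iff.1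
    (hρ.mul_mul_conjTranspose_same (N - e • 1)).trace_nonneg).1
  rw [centered, Matrix.trace_mul_comm, ← mul_assoc] at variance_nonneg
  simp only [sub_mul, mul_sub, smul_mul_assoc, mul_smul_comm, one_mul, mul_one, trace_sub,
    trace_smul, map_sub, RCLike.smul_re, ← he, hρ_trace, RCLike.one_re] at variance_nonneg
  linarith

lemma sum_sq_re_trace_mul_le_one [DecidableEq n] [Fintype ι] [DecidableEq ι] (hρ : ρ.PosSemidef)
    (hρ_trace : ρ.trace = 1) {X : ι → Matrix n n 𝕜} (hX_herm : ∀ i, (X i).IsHermitian)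
    (hX : ∀ i j, X i * X j + X j * X i = if i = j then 2 else 0) :
    ∑ i, RCLike.re (X i * ρ).trace ^ 2 ≤ 1 := by
  set u : ι → ℝ := fun i ↦ RCLike.re (X i * ρ).trace with hu
  set N : Matrix n n 𝕜 := ∑ i, u i • X i with hN
  have hN_herm : N.IsHermitian := by
    simp [IsHermitian, hN, conjTranspose_sum, fun i ↦ (hX_herm i).eq]
  have trace_N : RCLike.re (N * ρ).trace = ∑ i, u i ^ 2 := by
    simp [hN, Finset.sum_mul, trace_sum, RCLike.smul_re, sq, hu]
  have trace_N_sq : RCLike.re (N * N * ρ).trace = ∑ i, u i ^ 2 := by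
    rw [hN, sum_smul_mul_self_of_anticomm hX]
    simp [hρ_trace, RCLike.smul_re]
  have sq_le := sq_re_trace_mul_le hρ hρ_trace hN_herm
  rw [trace_N, trace_N_sq] at sq_le
  by_contra! one_lt
  nlinarith

end States

/-- The Pauli matrices `σ_x, σ_y, σ_z`, indexed by `Fin 3` so that their relations are invariant
under `j ↦ j + 1`. -/
def pauli : Fin 3 → Matrix (Fin 2) (Fin 2) ℂ :=
  ![!![0, 1; 1, 0], !![0, -Complex.I; Complex.I, 0], !![1, 0; 0, -1]]

lemma pauli_mul (j k : Fin 3) :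
    pauli j * pauli k = if j = k then 1 else
      if k = j + 1 then Complex.I • pauli (j + 2) else (-Complex.I) • pauli (j + 1) := by
  fin_cases j <;> fin_cases k <;> ext a b <;> fin_cases a <;> fin_cases b <;> simp [pauli]

lemma pauli_isHermitian (j : Fin 3) : (pauli j).IsHermitian := by
  fin_cases j <;> ext a b <;> fin_cases a <;> fin_cases b <;> simp [pauli]

lemma trace_pauli (j : Fin 3) : (pauli j).trace = 0 := by
  fin_cases j <;> simp [pauli, trace_fin_two]

lemma trace_pauli_mul_pauli (j k : Fin 3) :
    (pauli j * pauli k).trace = if j = k then 2 else 0 := by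
  rw [pauli_mul]
  split_ifs <;> simp [trace_pauli]

lemma pauli_anticomm (j k : Fin 3) :
    pauli j * pauli k + pauli k * pauli j = if j = k then 2 else 0 := by
  fin_cases j <;> fin_cases k <;> simp [pauli_mul, one_add_one_eq_two]

lemma pauli_mul_comm (j k : Fin 3) :
    pauli j * pauli k = (if k = j then 1 else -1 : ℝ) • (pauli k * pauli j) := by
  split_ifs with hkj
  · rw [hkj, one_smul]
  · rw [neg_one_smul, eq_neg_iff_add_eq_zero, pauli_anticomm, if_neg (Ne.symm hkj)]

/-- The qubit density matrix with Bloch vector `s`. -/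
def blochState (s : Fin 3 → ℝ) : Matrix (Fin 2) (Fin 2) ℂ :=
  (1 / 2 : ℝ) • (1 + ∑ j, s j • pauli j)

lemma trace_blochState (s : Fin 3 → ℝ) : (blochState s).trace = 1 := by
  simp [blochState, trace_sum, trace_pauli]

lemma trace_pauli_mul_blochState (s : Fin 3 → ℝ) (j : Fin 3) :
    (pauli j * blochState s).trace = s j := by
  simp [blochState, mul_add, Finset.mul_sum, trace_sum, trace_pauli, trace_pauli_mul_pauli,
    mul_comm (2 : ℂ)⁻¹]

lemma posSemidef_blochState {s : Fin 3 → ℝ} (hs : ∑ j, s j ^ 2 ≤ 1) :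
    (blochState s).PosSemidef := by
  have hermitian : (blochState s)ᴴ = blochState s := by
    simp [blochState, conjTranspose_sum, fun j ↦ (pauli_isHermitian j).eq]
  have decomposition : blochState s =
      (blochState s)ᴴ * blochState s + ((1 - ∑ j, s j ^ 2) / 4) • 1 := by
    have sq_eq := sum_smul_mul_self_of_anticomm pauli_anticomm s
    rw [hermitian]
    simp only [blochState, smul_mul_smul_comm, mul_add, add_mul, one_mul, mul_one, sq_eq]
    module
  rw [decomposition]
  exact (posSemidef_conjTranspose_mul_self _).add (PosSemidef.one.smul (by linarith))

/-- The unitary `exp (i φ σ_k ⊗ σ_k)`, in closed form because `(σ_k ⊗ σ_k)² = 1`. -/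
def coupling (φ : ℝ) (k : Fin 3) : Matrix (Fin 2 × Fin 2) (Fin 2 × Fin 2) ℂ :=
  cos φ • 1 + sin φ • Complex.I • (pauli k ⊗ₖ pauli k)

lemma coupling_zero (k : Fin 3) : coupling 0 k = 1 := by
  simp [coupling]

lemma coupling_add (φ ψ : ℝ) (k : Fin 3) :
    coupling (φ + ψ) k = coupling φ k * coupling ψ k := by
  have kron_sq : (pauli k ⊗ₖ pauli k) * (pauli k ⊗ₖ pauli k) = 1 := by
    simp [← mul_kronecker_mul, pauli_mul]
  simp only [coupling, add_mul, mul_add, smul_mul_smul_comm, kron_sq, one_mul, mul_one,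
    cos_add, sin_add]
  simp only [Complex.I_mul_I]
  module

lemma coupling_conjTranspose (φ : ℝ) (k : Fin 3) : (coupling φ k)ᴴ = coupling (-φ) k := by
  simp [coupling, conjTranspose_kronecker, (pauli_isHermitian k).eq]

lemma coupling_commute (φ ψ : ℝ) (j k : Fin 3) : Commute (coupling φ j) (coupling ψ k) := by
  have kron_comm : Commute (pauli j ⊗ₖ pauli j) (pauli k ⊗ₖ pauli k) := by
    rw [commute_iff_eq, ← mul_kronecker_mul, ← mul_kronecker_mul, pauli_mul_comm j k,
      smul_kronecker, kronecker_smul]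
    split_ifs <;> simp
  exact ((Commute.one_left _).smul_left _).add_left (((Commute.one_right _).smul_right _).add_right
    (((kron_comm.smul_left _).smul_right _).smul_left _ |>.smul_right _))

lemma pauli_kronecker_one_mul_coupling (φ : ℝ) (j k : Fin 3) :
    (pauli j ⊗ₖ 1) * coupling φ k = coupling (if k = j then φ else -φ) k * (pauli j ⊗ₖ 1) := by
  have flip : (pauli j ⊗ₖ 1) * (pauli k ⊗ₖ pauli k) =
      (if k = j then 1 else -1 : ℝ) • ((pauli k ⊗ₖ pauli k) * (pauli j ⊗ₖ 1)) := by
    rw [← mul_kronecker_mul, ← mul_kronecker_mul, pauli_mul_comm j k, smul_kronecker, one_mul,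
      mul_one]
  simp only [coupling, mul_add, add_mul, mul_smul_comm, smul_mul_assoc, one_mul, mul_one, flip]
  split_ifs <;> simp

/-- The two-qubit unitary `exp (i ∑ k, θ k σ_k ⊗ σ_k)`, whose three factors commute. -/
def propagator (θ : Fin 3 → ℝ) : Matrix (Fin 2 × Fin 2) (Fin 2 × Fin 2) ℂ :=
  coupling (θ 0) 0 * coupling (θ 1) 1 * coupling (θ 2) 2

lemma propagator_zero : propagator 0 = 1 := by
  simp [propagator, coupling_zero]

lemma propagator_add (θ ψ : Fin 3 → ℝ) :
    propagator (θ + ψ) = propagator θ * propagator ψ := by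
  simp only [propagator, Pi.add_apply, coupling_add]
  rw [((coupling_commute _ _ 2 0).mul_right (coupling_commute _ _ 2 1)).mul_mul_mul_comm,
    (coupling_commute _ _ 1 0).mul_mul_mul_comm]

lemma propagator_conjTranspose (θ : Fin 3 → ℝ) : (propagator θ)ᴴ = propagator (-θ) := by
  simp only [propagator, conjTranspose_mul, coupling_conjTranspose, Pi.neg_apply]
  rw [(coupling_commute _ _ 1 0).eq,
    ((coupling_commute _ _ 2 0).mul_right (coupling_commute _ _ 2 1)).eq]

lemma propagator_conjTranspose_mul_self (θ : Fin 3 → ℝ) :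
    (propagator θ)ᴴ * propagator θ = 1 := by
  rw [propagator_conjTranspose, ← propagator_add, neg_add_cancel, propagator_zero]

lemma pauli_kronecker_one_mul_propagator (θ : Fin 3 → ℝ) (j : Fin 3) :
    (pauli j ⊗ₖ 1) * propagator θ =
      propagator (fun k ↦ if k = j then θ k else -θ k) * (pauli j ⊗ₖ 1) := by
  simp only [propagator, ← mul_assoc]
  rw [pauli_kronecker_one_mul_coupling, mul_assoc _ (pauli j ⊗ₖ 1),
    pauli_kronecker_one_mul_coupling, ← mul_assoc, mul_assoc _ (pauli j ⊗ₖ 1),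
    pauli_kronecker_one_mul_coupling, ← mul_assoc]

lemma conjTranspose_propagator_mul_pauli_mul_propagator (θ : Fin 3 → ℝ) (j : Fin 3) :
    (propagator θ)ᴴ * (pauli j ⊗ₖ 1) * propagator θ =
      (cos (2 * θ (j + 1)) * cos (2 * θ (j + 2))) • (pauli j ⊗ₖ 1)
        + (sin (2 * θ (j + 1)) * sin (2 * θ (j + 2))) • (1 ⊗ₖ pauli j)
        + (cos (2 * θ (j + 1)) * sin (2 * θ (j + 2))) • (pauli (j + 1) ⊗ₖ pauli (j + 2))
        - (sin (2 * θ (j + 1)) * cos (2 * θ (j + 2))) • (pauli (j + 2) ⊗ₖ pauli (j + 1)) := by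
  have merged : (propagator θ)ᴴ * (pauli j ⊗ₖ 1) * propagator θ =
      propagator (fun k ↦ if k = j then 0 else -(2 * θ k)) * (pauli j ⊗ₖ 1) := by
    rw [mul_assoc, pauli_kronecker_one_mul_propagator, propagator_conjTranspose, ← mul_assoc,
      ← propagator_add]
    congr 2
    ext k
    by_cases hk : k = j
    · simp [hk]
    · simp only [Pi.add_apply, Pi.neg_apply, if_neg hk]
      ring
  have two_factors : propagator (fun k ↦ if k = j then 0 else -(2 * θ k)) =
      coupling (-(2 * θ (j + 1))) (j + 1) * coupling (-(2 * θ (j + 2))) (j + 2) := by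
    fin_cases j <;> simp [propagator, coupling_zero, (coupling_commute _ _ 2 0).eq]
  have inner_rotation (φ : ℝ) : coupling (-φ) (j + 2) * (pauli j ⊗ₖ 1) =
      cos φ • (pauli j ⊗ₖ 1) + sin φ • (pauli (j + 1) ⊗ₖ pauli (j + 2)) := by
    fin_cases j <;>
      simp [coupling, add_mul, ← mul_kronecker_mul, pauli_mul, smul_kronecker, smul_smul]
  have outer_rotation (φ : ℝ) : coupling (-φ) (j + 1) * (pauli j ⊗ₖ 1) =
      cos φ • (pauli j ⊗ₖ 1) - sin φ • (pauli (j + 2) ⊗ₖ pauli (j + 1)) := by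
    rw [sub_eq_add_neg, ← neg_smul]
    fin_cases j <;>
      simp [coupling, add_mul, ← mul_kronecker_mul, pauli_mul, smul_kronecker, smul_smul, -neg_smul]
  have outer_rotation_mixed (φ : ℝ) :
      coupling (-φ) (j + 1) * (pauli (j + 1) ⊗ₖ pauli (j + 2)) =
        cos φ • (pauli (j + 1) ⊗ₖ pauli (j + 2)) + sin φ • (1 ⊗ₖ pauli j) := by
    fin_cases j <;>
      simp [coupling, add_mul, ← mul_kronecker_mul, pauli_mul, kronecker_smul, smul_smul]
  rw [merged, two_factors, mul_assoc, inner_rotation, mul_add, mul_smul_comm, mul_smul_comm,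
    outer_rotation, outer_rotation_mixed]
  module

/-- The Bloch vector of the first qubit after two qubits with Bloch vectors `s` and `p` evolve
under `exp (i ∑ k, θ k σ_k ⊗ σ_k)`. -/
def blochFlow (θ s p : Fin 3 → ℝ) (j : Fin 3) : ℝ :=
  cos (2 * θ (j + 1)) * cos (2 * θ (j + 2)) * s j
    + sin (2 * θ (j + 1)) * sin (2 * θ (j + 2)) * p j
    + cos (2 * θ (j + 1)) * sin (2 * θ (j + 2)) * (s (j + 1) * p (j + 2))
    - sin (2 * θ (j + 1)) * cos (2 * θ (j + 2)) * (s (j + 2) * p (j + 1))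

lemma re_trace_evolved_eq_blochFlow (θ s p : Fin 3 → ℝ) (j : Fin 3) :
    RCLike.re ((pauli j ⊗ₖ 1) *
      (propagator θ * (blochState s ⊗ₖ blochState p) * (propagator θ)ᴴ)).trace =
      blochFlow θ s p j := by
  have cyclic : ((pauli j ⊗ₖ 1) *
      (propagator θ * (blochState s ⊗ₖ blochState p) * (propagator θ)ᴴ)).trace =
      ((propagator θ)ᴴ * (pauli j ⊗ₖ 1) * propagator θ *
        (blochState s ⊗ₖ blochState p)).trace := by
    rw [← mul_assoc, Matrix.trace_mul_comm]
    simp only [mul_assoc]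
  rw [cyclic, conjTranspose_propagator_mul_pauli_mul_propagator]
  simp only [add_mul, sub_mul, smul_mul_assoc, ← mul_kronecker_mul, one_mul, trace_add, trace_sub,
    trace_smul, trace_kronecker, trace_pauli_mul_blochState, trace_blochState, mul_one,
    map_add, map_sub, RCLike.smul_re, blochFlow]
  simp

lemma sum_sq_blochFlow_le_one (θ : Fin 3 → ℝ) {s p : Fin 3 → ℝ} (hs : ∑ j, s j ^ 2 ≤ 1)
    (hp : ∑ j, p j ^ 2 ≤ 1) : ∑ j, blochFlow θ s p j ^ 2 ≤ 1 := by
  have evolved_psd := ((posSemidef_blochState hs).kronecker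
    (posSemidef_blochState hp)).mul_mul_conjTranspose_same (propagator θ)
  have evolved_trace :
      (propagator θ * (blochState s ⊗ₖ blochState p) * (propagator θ)ᴴ).trace = 1 := by
    rw [Matrix.trace_mul_comm, ← mul_assoc, propagator_conjTranspose_mul_self, one_mul,
      trace_kronecker, trace_blochState, trace_blochState, one_mul]
  have local_herm (j : Fin 3) : (pauli j ⊗ₖ (1 : Matrix (Fin 2) (Fin 2) ℂ)).IsHermitian := by
    rw [IsHermitian, conjTranspose_kronecker, pauli_isHermitian j, conjTranspose_one]
  have local_anticomm (j k : Fin 3) :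
      (pauli j ⊗ₖ (1 : Matrix (Fin 2) (Fin 2) ℂ)) * (pauli k ⊗ₖ 1)
        + (pauli k ⊗ₖ 1) * (pauli j ⊗ₖ 1) = if j = k then 2 else 0 := by
    rw [← mul_kronecker_mul, ← mul_kronecker_mul, ← add_kronecker, pauli_anticomm]
    split_ifs <;> simp [← one_add_one_eq_two, add_kronecker]
  simpa only [re_trace_evolved_eq_blochFlow] using
    sum_sq_re_trace_mul_le_one evolved_psd evolved_trace local_herm local_anticomm

lemma blochFlow_zero_left (θ p : Fin 3 → ℝ) (j : Fin 3) :
    blochFlow θ 0 p j = sin (2 * θ (j + 1)) * sin (2 * θ (j + 2)) * p j := by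
  simp [blochFlow]

lemma blochFlow_of_cos_eq_zero {θ : Fin 3 → ℝ} (hθ : ∀ k, cos (2 * θ k) = 0)
    (s p : Fin 3 → ℝ) (j : Fin 3) :
    blochFlow θ s p j = sin (2 * θ (j + 1)) * sin (2 * θ (j + 2)) * p j := by
  simp [blochFlow, hθ]

lemma Amat_mulVec_add_avec (cx cy cz t : ℝ) (s p : Fin 3 → ℝ) :
    Amat cx cy cz t s *ᵥ p + avec cx cy cz t s = blochFlow (t • ![cx, cy, cz]) s p := by
  have angle (c : ℝ) : 2 * c * t = 2 * (t * c) := by ring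
  ext j
  fin_cases j <;>
    simp only [Amat, avec, blochFlow, angle, cons_mulVec, empty_mulVec, dotProduct,
      Fin.sum_univ_three, Fin.isValue, Fin.zero_eta, Fin.mk_one, Fin.reduceFinMk, Fin.reduceAdd,
      zero_add, cons_val_zero, cons_val_one, cons_val, Pi.add_apply, Pi.smul_apply, smul_eq_mul] <;>
    ring

lemma mem_reach_iff {cx cy cz : ℝ} {s v : EuclideanSpace ℝ (Fin 3)} :
    v ∈ reach cx cy cz s ↔ ∃ t ≥ (0 : ℝ), ∃ p : EuclideanSpace ℝ (Fin 3), ‖p‖ ≤ 1 ∧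
      ∀ j, blochFlow (t • ![cx, cy, cz]) s p j = v j := by
  simp only [reach, Amat_mulVec_add_avec, funext_iff, Set.mem_ofPred_eq]

lemma euclidean_norm_le_one_iff {ι : Type*} [Fintype ι] {v : EuclideanSpace ℝ ι} :
    ‖v‖ ≤ 1 ↔ ∑ j, v j ^ 2 ≤ 1 := by
  rw [← EuclideanSpace.real_norm_sq_eq, sq_le_one_iff₀ (norm_nonneg v)]

lemma reach_subset_closedBall (cx cy cz : ℝ) {s : EuclideanSpace ℝ (Fin 3)} (hs : ‖s‖ ≤ 1) :
    reach cx cy cz s ⊆ Metric.closedBall 0 1 := by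
  intro v hv
  obtain ⟨t, -, p, hp, hflow⟩ := mem_reach_iff.1 hv
  rw [mem_closedBall_zero_iff, euclidean_norm_le_one_iff]
  simpa only [hflow] using
    sum_sq_blochFlow_le_one (t • ![cx, cy, cz]) (euclidean_norm_le_one_iff.1 hs)
      (euclidean_norm_le_one_iff.1 hp)

lemma closedBall_subset_reach {cx cy cz t : ℝ} (ht : 0 ≤ t)
    (hcos : ∀ k, cos (2 * (t • ![cx, cy, cz]) k) = 0) (s : EuclideanSpace ℝ (Fin 3)) :
    Metric.closedBall 0 1 ⊆ reach cx cy cz s := by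
  intro v hv
  rw [mem_closedBall_zero_iff, euclidean_norm_le_one_iff] at hv
  set g : Fin 3 → ℝ := fun j ↦
    sin (2 * (t • ![cx, cy, cz]) (j + 1)) * sin (2 * (t • ![cx, cy, cz]) (j + 2))
  have g_sq (j : Fin 3) : g j ^ 2 = 1 := by
    simp only [g, mul_pow, sin_sq, hcos]
    norm_num
  refine mem_reach_iff.2 ⟨t, ht, WithLp.toLp 2 fun j ↦ g j * v j, ?_, fun j ↦ ?_⟩
  · simpa only [euclidean_norm_le_one_iff, mul_pow, g_sq, one_mul] using hv
  · rw [blochFlow_of_cos_eq_zero hcos]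
    linear_combination v j * g_sq j

lemma sq_eq_one_of_sum_sq_le_sum_sq_mul {ι : Type*} [Fintype ι] {g p : ι → ℝ}
    (hg : ∀ i, g i ^ 2 ≤ 1) (hgp : ∑ i, p i ^ 2 ≤ ∑ i, (g i * p i) ^ 2) {i : ι} (hi : p i ≠ 0) :
    g i ^ 2 = 1 := by
  have termwise_le (i : ι) : (g i * p i) ^ 2 ≤ p i ^ 2 := by
    rw [mul_pow]
    exact mul_le_of_le_one_left (sq_nonneg _) (hg i)
  have sum_eq := (Finset.sum_le_sum fun i _ ↦ termwise_le i).antisymm hgp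
  have termwise_eq := (Finset.sum_eq_sum_iff_of_le fun i _ ↦ termwise_le i).1 sum_eq i
    (Finset.mem_univ i)
  rw [mul_pow] at termwise_eq
  exact (mul_eq_right₀ (pow_ne_zero 2 hi)).1 termwise_eq

lemma cos_eq_zero_of_one_le_sum_sq_blochFlow_zero {θ p : Fin 3 → ℝ} (hp : ∑ j, p j ^ 2 ≤ 1)
    (hflow : 1 ≤ ∑ j, blochFlow θ 0 p j ^ 2) (hne : ∀ j, blochFlow θ 0 p j ≠ 0) (k : Fin 3) :
    cos (2 * θ k) = 0 := by
  simp only [blochFlow_zero_left] at hflow hne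
  have gain_le (j : Fin 3) : (sin (2 * θ (j + 1)) * sin (2 * θ (j + 2))) ^ 2 ≤ 1 := by
    rw [mul_pow]
    exact mul_le_one₀ (sin_sq_le_one _) (sq_nonneg _) (sin_sq_le_one _)
  have gain_eq := sq_eq_one_of_sum_sq_le_sum_sq_mul gain_le (hp.trans hflow)
    (right_ne_zero_of_mul (hne (k + 2)))
  have hk : k + 2 + 1 = k := (add_assoc k 2 1).trans (add_zero k)
  rw [hk, mul_pow] at gain_eq
  have sin_sq_eq_one : sin (2 * θ k) ^ 2 = 1 :=
    (sin_sq_le_one _).antisymm <|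
      gain_eq.symm.trans_le (mul_le_of_le_one_right (sq_nonneg _) (sin_sq_le_one _))
  exact cos_eq_zero_iff_sin_eq.2 (sq_eq_one_iff.1 sin_sq_eq_one)

lemma OddRatio.exists_cos_eq_zero {cx cy cz : ℝ} (h : OddRatio cx cy cz) :
    ∃ t ≥ (0 : ℝ), ∀ k, cos (2 * (t • ![cx, cy, cz]) k) = 0 := by
  obtain ⟨hx, -, -, k₁, k₂, k₃, hy, hz⟩ := h
  set t : ℝ := (2 * k₁ + 1) * π / (4 * cx) with ht
  have hcos (k : Fin 3) : cos (2 * (t • ![cx, cy, cz]) k) = 0 := by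
    refine cos_eq_zero_iff.2 ⟨![k₁, k₂, k₃] k, ?_⟩
    fin_cases k <;>
      simp only [ht, Fin.zero_eta, Fin.mk_one, Fin.reduceFinMk, Fin.isValue, cons_val_zero,
        cons_val_one, cons_val, Pi.smul_apply, smul_eq_mul] <;>
      field_simp
    · ring
    · linear_combination -4 * hy
    · linear_combination -4 * hz
  obtain h | h := le_total 0 t
  · exact ⟨t, h, hcos⟩
  · refine ⟨-t, neg_nonneg.2 h, fun k ↦ ?_⟩
    rw [neg_smul, Pi.neg_apply, mul_neg, cos_neg, hcos]

lemma oddRatio_of_cos_eq_zero {cx cy cz t : ℝ}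
    (hcos : ∀ k, cos (2 * (t • ![cx, cy, cz]) k) = 0) : OddRatio cx cy cz := by
  have hne (k : Fin 3) : (t • ![cx, cy, cz]) k ≠ 0 := fun h ↦ by simpa [h] using hcos k
  have ht : t ≠ 0 := left_ne_zero_of_mul (hne 0)
  obtain ⟨k₁, hk₁⟩ := cos_eq_zero_iff.1 (hcos 0)
  obtain ⟨k₂, hk₂⟩ := cos_eq_zero_iff.1 (hcos 1)
  obtain ⟨k₃, hk₃⟩ := cos_eq_zero_iff.1 (hcos 2)
  simp only [Pi.smul_apply, smul_eq_mul, cons_val] at hk₁ hk₂ hk₃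
  refine ⟨right_ne_zero_of_mul (hne 0), right_ne_zero_of_mul (hne 1),
    right_ne_zero_of_mul (hne 2), k₁, k₂, k₃, ?_, ?_⟩ <;>
    apply mul_right_cancel₀ (mul_ne_zero pi_ne_zero ht)
  · linear_combination (2 * k₂ + 1) * π / 2 * hk₁ - (2 * k₁ + 1) * π / 2 * hk₂
  · linear_combination (2 * k₃ + 1) * π / 2 * hk₁ - (2 * k₁ + 1) * π / 2 * hk₃

lemma oddRatio_of_closedBall_subset_reach_zero {cx cy cz : ℝ}
    (h : Metric.closedBall 0 1 ⊆ reach cx cy cz 0) : OddRatio cx cy cz := by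
  -- Any unit vector without zero coordinates would do.
  set v : EuclideanSpace ℝ (Fin 3) := !₂[2 / 3, 2 / 3, 1 / 3] with hv
  have v_sum_sq : ∑ j, v j ^ 2 = 1 := by
    simp only [hv, Fin.sum_univ_three, Fin.isValue, PiLp.toLp_apply, cons_val_zero,
      cons_val_one, cons_val]
    norm_num
  have v_ne_zero (j : Fin 3) : v j ≠ 0 := by
    fin_cases j <;> simp [hv]
  have v_mem : v ∈ Metric.closedBall 0 1 := by
    rw [mem_closedBall_zero_iff, euclidean_norm_le_one_iff, v_sum_sq]
  obtain ⟨t, -, p, hp, hflow⟩ := mem_reach_iff.1 (h v_mem)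
  simp only [WithLp.ofLp_zero] at hflow
  refine oddRatio_of_cos_eq_zero (t := t) <|
    cos_eq_zero_of_one_le_sum_sq_blochFlow_zero (p := p) (euclidean_norm_le_one_iff.1 hp) ?_ ?_
  · simp only [hflow, v_sum_sq, le_refl]
  · simpa only [hflow] using v_ne_zero

/-- Theorem 1, controllability: the reachable set from every Bloch
vector in the unit ball is the whole closed unit ball iff the odd-ratio condition
holds. -/
theorem controllable_iff_oddRatio (cx cy cz : ℝ) :
    (∀ s₀ : EuclideanSpace ℝ (Fin 3), ‖s₀‖ ≤ 1 →
      reach cx cy cz s₀ = Metric.closedBall (0 : EuclideanSpace ℝ (Fin 3)) 1) ↔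
    OddRatio cx cy cz := by
  constructor
  · intro controllable
    exact oddRatio_of_closedBall_subset_reach_zero (controllable 0 (by simp)).ge
  · intro oddRatio s₀ hs₀
    obtain ⟨t, ht, hcos⟩ := oddRatio.exists_cos_eq_zero
    exact (reach_subset_closedBall cx cy cz hs₀).antisymm (closedBall_subset_reach ht hcos s₀)
end
end

section
/- The following are equivalent: (i) for every s₀ ∈ ℝ³ with ‖s₀‖ ≤ 1 and every T > 0, the set R_T(s₀) has nonempty interior in ℝ³; (ii) c_x ≠ 0, c_y ≠ 0 and c_z ≠ 0. -/
open Matrix Real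

noncomputable section

/-- The reachable set from `s₀` until time `T`:
`R_T(s₀) = {A(t,s₀)p + a(t,s₀) : 0 ≤ t ≤ T, ‖p‖ ≤ 1}`. -/
def reachUntil (cx cy cz T : ℝ) (s₀ : EuclideanSpace ℝ (Fin 3)) :
    Set (EuclideanSpace ℝ (Fin 3)) :=
  {v | ∃ t, 0 ≤ t ∧ t ≤ T ∧ ∃ p : EuclideanSpace ℝ (Fin 3), ‖p‖ ≤ 1 ∧
    (Amat cx cy cz t s₀).mulVec p + avec cx cy cz t s₀ = v}

/-!
With `s₀ = 0` the matrix `A(t, 0)` is diagonal and `a(t, 0) = 0`; if one of the constants vanishes,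
so does a coordinate of every reachable point. Conversely, `det A(t, s₀)` is a sum of squares, one
of which is `(sin (2 c_x t) sin (2 c_y t) sin (2 c_z t))²`. If no constant vanishes, this square is
positive for all small `t > 0`, and a single such time already suffices: `p ↦ A(t, s₀) p + a(t, s₀)`
is then an open map, so the image of the unit ball has interior points.
-/

open Topology

section OpenMap

variable {X Y : Type*} [TopologicalSpace X] [TopologicalSpace Y] {f : X → Y} {s : Set X}

theorem nonempty_interior_image_of_isOpenMap (hf : IsOpenMap f) (hs : (interior s).Nonempty) :
    (interior (f '' s)).Nonempty :=
  (hs.image f).mono (hf.image_interior_subset s)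

theorem exists_apply_ne_of_nonempty_interior (hf : IsOpenMap f) (hs : (interior s).Nonempty)
    (y : Y) [(𝓝[≠] y).NeBot] : ∃ x ∈ s, f x ≠ y := by
  by_contra! h
  have hsub : f '' s ⊆ {y} := Set.image_subset_iff.2 h
  have hne := (nonempty_interior_image_of_isOpenMap hf hs).mono (interior_mono hsub)
  simp at hne

end OpenMap

theorem surjective_toLpLin_of_isUnit {R n : Type*} [CommRing R] [Fintype n] [DecidableEq n]
    {M : Matrix n n R} (hM : IsUnit M) (p q : ENNReal) : Function.Surjective (M.toLpLin p q) := by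
  intro v
  obtain ⟨x, hx⟩ := mulVec_surjective_iff_isUnit.2 hM v.ofLp
  exact ⟨WithLp.toLp p x, congrArg (WithLp.toLp q) hx⟩

theorem eventually_sin_mul_ne_zero {c : ℝ} (hc : c ≠ 0) :
    ∀ᶠ t in 𝓝[≠] 0, Real.sin (c * t) ≠ 0 := by
  have hderiv : HasDerivAt (fun t => Real.sin (c * t)) c 0 := by
    simpa using ((hasDerivAt_id (0 : ℝ)).const_mul c).sin
  exact hderiv.eventually_ne hc

section BlochDynamics

variable (cx cy cz t : ℝ)

theorem Amat_zero :
    Amat cx cy cz t 0 = diagonal ![Real.sin (2 * cy * t) * Real.sin (2 * cz * t),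
      Real.sin (2 * cx * t) * Real.sin (2 * cz * t),
      Real.sin (2 * cx * t) * Real.sin (2 * cy * t)] := by
  ext i j
  fin_cases i <;> fin_cases j <;> simp [Amat]

theorem avec_zero : avec cx cy cz t 0 = 0 := by
  ext i
  fin_cases i <;> simp [avec]

theorem det_Amat (s : Fin 3 → ℝ) :
    (Amat cx cy cz t s).det =
      (Real.sin (2 * cx * t) * Real.sin (2 * cy * t) * Real.sin (2 * cz * t)) ^ 2 +
      (s 0 * Real.cos (2 * cx * t) * Real.sin (2 * cy * t) * Real.sin (2 * cz * t)) ^ 2 +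
      (s 1 * Real.cos (2 * cy * t) * Real.sin (2 * cx * t) * Real.sin (2 * cz * t)) ^ 2 +
      (s 2 * Real.cos (2 * cz * t) * Real.sin (2 * cx * t) * Real.sin (2 * cy * t)) ^ 2 := by
  simp only [Amat, det_fin_three, of_apply, cons_val, cons_val', cons_val_zero, cons_val_one]
  ring

variable {cx cy cz t} {T : ℝ}

theorem isUnit_Amat (hx : Real.sin (2 * cx * t) ≠ 0) (hy : Real.sin (2 * cy * t) ≠ 0)
    (hz : Real.sin (2 * cz * t) ≠ 0) (s : Fin 3 → ℝ) : IsUnit (Amat cx cy cz t s) := by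
  have hdet : 0 < (Amat cx cy cz t s).det := by
    rw [det_Amat]
    positivity
  exact (isUnit_iff_isUnit_det _).2 hdet.ne'.isUnit

theorem image_closedBall_subset_reachUntil (ht : 0 ≤ t) (htT : t ≤ T)
    (s₀ : EuclideanSpace ℝ (Fin 3)) :
    (fun p => (Amat cx cy cz t s₀).toLpLin 2 2 p + WithLp.toLp 2 (avec cx cy cz t s₀)) ''
      Metric.closedBall 0 1 ⊆ reachUntil cx cy cz T s₀ := by
  rintro _ ⟨p, hp, rfl⟩
  exact ⟨t, ht, htT, p, mem_closedBall_zero_iff.1 hp, rfl⟩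

theorem nonempty_interior_reachUntil (hx : cx ≠ 0) (hy : cy ≠ 0) (hz : cz ≠ 0) (hT : 0 < T)
    (s₀ : EuclideanSpace ℝ (Fin 3)) : (interior (reachUntil cx cy cz T s₀)).Nonempty := by
  have hsin : ∀ᶠ t in 𝓝[>] (0 : ℝ), Real.sin (2 * cx * t) ≠ 0 ∧ Real.sin (2 * cy * t) ≠ 0 ∧
      Real.sin (2 * cz * t) ≠ 0 :=
    nhdsGT_le_nhdsNE 0 <| (eventually_sin_mul_ne_zero (mul_ne_zero two_ne_zero hx)).and <|
      (eventually_sin_mul_ne_zero (mul_ne_zero two_ne_zero hy)).and <|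
      eventually_sin_mul_ne_zero (mul_ne_zero two_ne_zero hz)
  obtain ⟨t, ⟨hsx, hsy, hsz⟩, ht, htT⟩ := (hsin.and (Ioc_mem_nhdsGT hT)).exists
  have hball : (interior (Metric.closedBall (0 : EuclideanSpace ℝ (Fin 3)) 1)).Nonempty :=
    (Metric.nonempty_ball.2 one_pos).mono Metric.ball_subset_interior_closedBall
  have hopen : IsOpenMap fun p =>
      (Amat cx cy cz t s₀).toLpLin 2 2 p + WithLp.toLp 2 (avec cx cy cz t s₀) :=
    (isOpenMap_add_right _).comp <| LinearMap.isOpenMap_of_finiteDimensional _ <|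
      surjective_toLpLin_of_isUnit (isUnit_Amat hsx hsy hsz s₀) 2 2
  exact (nonempty_interior_image_of_isOpenMap hopen hball).mono <|
    interior_mono (image_closedBall_subset_reachUntil ht.le htT s₀)

theorem exists_eq_Amat_mulVec_of_mem_reachUntil_zero {v : EuclideanSpace ℝ (Fin 3)}
    (hv : v ∈ reachUntil cx cy cz T 0) :
    ∃ (t : ℝ) (p : Fin 3 → ℝ), v.ofLp = Amat cx cy cz t 0 *ᵥ p := by
  obtain ⟨t, -, -, p, -, hp⟩ := hv
  rw [WithLp.ofLp_zero, avec_zero, add_zero] at hp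
  exact ⟨t, p, hp.symm⟩

theorem ne_zero_of_nonempty_interior_reachUntil_zero
    (h : (interior (reachUntil cx cy cz T 0)).Nonempty) : cx ≠ 0 ∧ cy ≠ 0 ∧ cz ≠ 0 := by
  have hcoord (i : Fin 3) : ∃ v ∈ reachUntil cx cy cz T 0, v i ≠ 0 :=
    exists_apply_ne_of_nonempty_interior (PiLp.isOpenMap_apply 2 _ i) h 0
  obtain ⟨v, hv, hv0⟩ := hcoord 0
  obtain ⟨w, hw, hw1⟩ := hcoord 1
  obtain ⟨t, p, hvp⟩ := exists_eq_Amat_mulVec_of_mem_reachUntil_zero hv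
  obtain ⟨u, q, hwq⟩ := exists_eq_Amat_mulVec_of_mem_reachUntil_zero hw
  rw [hvp, Amat_zero, mulVec_diagonal] at hv0
  rw [hwq, Amat_zero, mulVec_diagonal] at hw1
  refine ⟨?_, ?_, ?_⟩ <;> rintro rfl
  · simp at hw1
  · simp at hv0
  · simp at hv0

end BlochDynamics

/-- Theorem 2, accessibility: every reachable set `R_T(s₀)` has
nonempty interior iff `cₓ ≠ 0`, `c_y ≠ 0` and `c_z ≠ 0`. -/
theorem accessible_iff_nonzero (cx cy cz : ℝ) :
    (∀ s₀ : EuclideanSpace ℝ (Fin 3), ‖s₀‖ ≤ 1 → ∀ T > (0:ℝ),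
      (interior (reachUntil cx cy cz T s₀)).Nonempty) ↔
    (cx ≠ 0 ∧ cy ≠ 0 ∧ cz ≠ 0) := by
  refine ⟨fun h => ?_, fun ⟨hx, hy, hz⟩ s₀ _ T hT => nonempty_interior_reachUntil hx hy hz hT s₀⟩
  exact ne_zero_of_nonempty_interior_reachUntil_zero (h 0 (by simp) 1 one_pos)
end
end

section
/- If t ∈ ℝ is such that each of c_x t, c_y t, c_z t is an odd integer multiple of π/4 (i.e. of the form (2k+1)π/4 with k ∈ ℤ), then there exist φ ∈ ℝ and signs ε₀, ε_x, ε_y, ε_z ∈ {+1, −1} such that α_j(t) = ε_j · e^{iφ}/2 for every j ∈ {0, x, y, z}. -/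
open Matrix Kronecker Real

noncomputable section


/-- α₀(t) = cos(cₓt)cos(c_yt)cos(c_zt) + i sin(cₓt)sin(c_yt)sin(c_zt). -/
def α₀ (cx cy cz t : ℝ) : ℂ :=
  (Real.cos (cx*t) * Real.cos (cy*t) * Real.cos (cz*t) : ℝ) +
    Complex.I * (Real.sin (cx*t) * Real.sin (cy*t) * Real.sin (cz*t) : ℝ)

/-- αₓ(t) = cos(cₓt)sin(c_yt)sin(c_zt) + i sin(cₓt)cos(c_yt)cos(c_zt). -/
def αx (cx cy cz t : ℝ) : ℂ :=
  (Real.cos (cx*t) * Real.sin (cy*t) * Real.sin (cz*t) : ℝ) +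
    Complex.I * (Real.sin (cx*t) * Real.cos (cy*t) * Real.cos (cz*t) : ℝ)

/-- α_y(t) = sin(cₓt)cos(c_yt)sin(c_zt) + i cos(cₓt)sin(c_yt)cos(c_zt). -/
def αy (cx cy cz t : ℝ) : ℂ :=
  (Real.sin (cx*t) * Real.cos (cy*t) * Real.sin (cz*t) : ℝ) +
    Complex.I * (Real.cos (cx*t) * Real.sin (cy*t) * Real.cos (cz*t) : ℝ)

/-- α_z(t) = sin(cₓt)sin(c_yt)cos(c_zt) + i cos(cₓt)cos(c_yt)sin(c_zt). -/
def αz (cx cy cz t : ℝ) : ℂ :=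
  (Real.sin (cx*t) * Real.sin (cy*t) * Real.cos (cz*t) : ℝ) +
    Complex.I * (Real.cos (cx*t) * Real.cos (cy*t) * Real.sin (cz*t) : ℝ)

/-!
If `cos (2x) = 0`, then `s = sin (2x)` is a sign that exchanges sine and cosine: `sin x = s * cos x`
and `cos x = s * sin x`. Exchanging them at two of the three angles turns `α₀` into one of the other
coefficients, so all four agree up to sign; their common phase is `arg α₀`, and their common modulus
is `1/2` because all squared sines and cosines equal `1/2`.
-/

theorem cos_two_mul_eq_zero_iff {x : ℝ} :
    cos (2 * x) = 0 ↔ ∃ k : ℤ, x = (2 * (k : ℝ) + 1) * π / 4 := by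
  rw [Real.cos_eq_zero_iff]
  exact exists_congr fun k => ⟨fun h => by linarith, fun h => by linarith⟩

theorem sin_two_mul_mul_cos_of_cos_two_mul_eq_zero {x : ℝ} (hx : cos (2 * x) = 0) :
    sin (2 * x) * cos x = sin x := by
  have cos_sq_eq : cos x ^ 2 = 1 / 2 := by rw [Real.cos_sq, hx]; norm_num
  rw [Real.sin_two_mul]
  linear_combination 2 * sin x * cos_sq_eq

theorem sin_two_mul_mul_sin_of_cos_two_mul_eq_zero {x : ℝ} (hx : cos (2 * x) = 0) :
    sin (2 * x) * sin x = cos x := by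
  have sin_sq_eq : sin x ^ 2 = 1 / 2 := by rw [Real.sin_sq_eq_half_sub, hx]; norm_num
  rw [Real.sin_two_mul]
  linear_combination 2 * cos x * sin_sq_eq

theorem sin_mul_sin_eq_one_or_neg_one {x y : ℝ} (hx : cos x = 0) (hy : cos y = 0) :
    sin x * sin y = 1 ∨ sin x * sin y = -1 := by
  rcases Real.cos_eq_zero_iff_sin_eq.1 hx with hx | hx <;>
    rcases Real.cos_eq_zero_iff_sin_eq.1 hy with hy | hy <;> simp [hx, hy]

section Coefficients

variable {cx cy cz t : ℝ}

theorem α₀_swap : α₀ cy cx cz t = α₀ cx cy cz t := by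
  simp only [α₀, mul_comm]

theorem α₀_rotate : α₀ cz cx cy t = α₀ cx cy cz t := by
  simp only [α₀, mul_comm, mul_left_comm, mul_assoc]

theorem αy_eq_αx_swap : αy cx cy cz t = αx cy cx cz t := by
  simp only [αy, αx, mul_comm (cos (cy * t)), mul_comm (sin (cy * t))]

theorem αz_eq_αx_rotate : αz cx cy cz t = αx cz cx cy t := by
  simp only [αz, αx, mul_comm, mul_left_comm, mul_assoc]

theorem αx_eq_sin_mul_sin_mul_α₀ (hy : cos (2 * (cy * t)) = 0) (hz : cos (2 * (cz * t)) = 0) :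
    αx cx cy cz t = (sin (2 * (cy * t)) * sin (2 * (cz * t)) : ℝ) * α₀ cx cy cz t := by
  have re_eq : cos (cx * t) * sin (cy * t) * sin (cz * t) =
      sin (2 * (cy * t)) * sin (2 * (cz * t)) *
        (cos (cx * t) * cos (cy * t) * cos (cz * t)) := by
    rw [← sin_two_mul_mul_cos_of_cos_two_mul_eq_zero hy,
      ← sin_two_mul_mul_cos_of_cos_two_mul_eq_zero hz]
    ring
  have im_eq : sin (cx * t) * cos (cy * t) * cos (cz * t) =
      sin (2 * (cy * t)) * sin (2 * (cz * t)) *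
        (sin (cx * t) * sin (cy * t) * sin (cz * t)) := by
    rw [← sin_two_mul_mul_sin_of_cos_two_mul_eq_zero hy,
      ← sin_two_mul_mul_sin_of_cos_two_mul_eq_zero hz]
    ring
  rw [αx, α₀, re_eq, im_eq]
  push_cast
  ring

theorem αy_eq_sin_mul_sin_mul_α₀ (hx : cos (2 * (cx * t)) = 0) (hz : cos (2 * (cz * t)) = 0) :
    αy cx cy cz t = (sin (2 * (cx * t)) * sin (2 * (cz * t)) : ℝ) * α₀ cx cy cz t := by
  rw [αy_eq_αx_swap, αx_eq_sin_mul_sin_mul_α₀ hx hz, α₀_swap]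

theorem αz_eq_sin_mul_sin_mul_α₀ (hx : cos (2 * (cx * t)) = 0) (hy : cos (2 * (cy * t)) = 0) :
    αz cx cy cz t = (sin (2 * (cx * t)) * sin (2 * (cy * t)) : ℝ) * α₀ cx cy cz t := by
  rw [αz_eq_αx_rotate, αx_eq_sin_mul_sin_mul_α₀ hx hy, α₀_rotate]

theorem norm_α₀_eq_half (hx : cos (2 * (cx * t)) = 0) (hy : cos (2 * (cy * t)) = 0)
    (hz : cos (2 * (cz * t)) = 0) : ‖α₀ cx cy cz t‖ = 1 / 2 := by
  have norm_sq_eq : ‖α₀ cx cy cz t‖ ^ 2 = (1 / 2) ^ 2 := by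
    rw [← Complex.normSq_eq_norm_sq, α₀, mul_comm Complex.I, Complex.normSq_add_mul_I]
    simp only [mul_pow, Real.cos_sq, Real.sin_sq_eq_half_sub, hx, hy, hz]
    norm_num
  exact (sq_eq_sq₀ (norm_nonneg _) (by norm_num)).1 norm_sq_eq

theorem α₀_eq_exp_arg_div_two (hx : cos (2 * (cx * t)) = 0) (hy : cos (2 * (cy * t)) = 0)
    (hz : cos (2 * (cz * t)) = 0) :
    α₀ cx cy cz t = Complex.exp (Complex.I * (α₀ cx cy cz t).arg) / 2 := by
  have polar := Complex.norm_mul_exp_arg_mul_I (α₀ cx cy cz t)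
  rw [norm_α₀_eq_half hx hy hz, mul_comm _ Complex.I] at polar
  push_cast at polar
  linear_combination -polar

end Coefficients

/-- if `cₓt, c_yt, c_zt` are all odd integer multiples of `π/4`, then
all four coefficients `α_j(t)` equal `± e^{iφ}/2` for a common phase `φ`. -/
theorem alphas_eq_sign_phase (cx cy cz t : ℝ)
    (hx : ∃ k : ℤ, cx * t = (2 * (k:ℝ) + 1) * π / 4)
    (hy : ∃ k : ℤ, cy * t = (2 * (k:ℝ) + 1) * π / 4)
    (hz : ∃ k : ℤ, cz * t = (2 * (k:ℝ) + 1) * π / 4) :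
    ∃ φ : ℝ, ∃ ε₀ εx εy εz : ℝ,
      (ε₀ = 1 ∨ ε₀ = -1) ∧ (εx = 1 ∨ εx = -1) ∧ (εy = 1 ∨ εy = -1) ∧ (εz = 1 ∨ εz = -1) ∧
      α₀ cx cy cz t = (ε₀ : ℂ) * Complex.exp (Complex.I * (φ:ℝ)) / 2 ∧
      αx cx cy cz t = (εx : ℂ) * Complex.exp (Complex.I * (φ:ℝ)) / 2 ∧
      αy cx cy cz t = (εy : ℂ) * Complex.exp (Complex.I * (φ:ℝ)) / 2 ∧
      αz cx cy cz t = (εz : ℂ) * Complex.exp (Complex.I * (φ:ℝ)) / 2 := by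
  rw [← cos_two_mul_eq_zero_iff] at hx hy hz
  have h₀ := α₀_eq_exp_arg_div_two hx hy hz
  refine ⟨(α₀ cx cy cz t).arg, 1, sin (2 * (cy * t)) * sin (2 * (cz * t)),
    sin (2 * (cx * t)) * sin (2 * (cz * t)), sin (2 * (cx * t)) * sin (2 * (cy * t)),
    Or.inl rfl, sin_mul_sin_eq_one_or_neg_one hy hz, sin_mul_sin_eq_one_or_neg_one hx hz,
    sin_mul_sin_eq_one_or_neg_one hx hy, ?_⟩
  simp only [mul_div_assoc, ← h₀]
  exact ⟨by rw [Complex.ofReal_one, one_mul], αx_eq_sin_mul_sin_mul_α₀ hy hz,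
    αy_eq_sin_mul_sin_mul_α₀ hx hz, αz_eq_sin_mul_sin_mul_α₀ hx hy⟩
end
end

section
/- Suppose each of c_x, c_y, c_z is an odd integer multiple of π/8 (i.e. of the form (2k+1)π/8 with k ∈ ℤ). Then for every s₀ ∈ ℝ³ with ‖s₀‖ = 1 there exists p ∈ ℝ³ with ‖p‖ = 1 such that A(1,s₀)·p + a(1,s₀) = 0. -/
open Matrix Real

noncomputable section

/-!
Put `θᵢ = 2 cᵢ t`, suppose that no `sin θᵢ` vanishes, and let `(i, j, k)` be a cyclic permutation
of `(x, y, z)`. Dividing the `i`-th equation of `A p + a = 0` by `sin θⱼ sin θₖ` leaves only the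
cotangents `κᵢ = cot θᵢ`. Cancelling `a` against the diagonal of `A` forces `pᵢ = -κⱼ κₖ sᵢ`, and
for this `p` the off-diagonal terms add up to `κᵢ (κₖ² - κⱼ²) sⱼ sₖ`. These vanish as soon as the
`κᵢ²` have a common value `r`, and then `‖p‖ = r ‖s‖`. Odd multiples of `π / 8` at `t = 1` are
exactly the case `r = 1`.
-/

lemma cos_sq_eq_sin_sq_iff {θ : ℝ} :
    cos θ ^ 2 = sin θ ^ 2 ↔ ∃ k : ℤ, θ = (2 * (k : ℝ) + 1) * π / 4 := by
  rw [← sub_eq_zero, ← cos_two_mul', cos_eq_zero_iff]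
  exact exists_congr fun k ↦ ⟨fun h ↦ by linarith, fun h ↦ by linarith⟩

lemma cos_sq_eq_sin_sq_of_eq_odd_mul_pi_div_eight {c : ℝ}
    (h : ∃ k : ℤ, c = (2 * (k : ℝ) + 1) * π / 8) : cos (2 * c) ^ 2 = sin (2 * c) ^ 2 :=
  cos_sq_eq_sin_sq_iff.2 <| h.imp fun _ hk ↦ by linarith

lemma sin_ne_zero_of_cos_sq_eq_mul_sin_sq {θ r : ℝ} (h : cos θ ^ 2 = r * sin θ ^ 2) :
    sin θ ≠ 0 := by
  intro hsin
  simpa [h, hsin] using sin_sq_add_cos_sq θ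

lemma cot_sq_eq_of_cos_sq_eq_mul_sin_sq {θ r : ℝ} (h : cos θ ^ 2 = r * sin θ ^ 2) :
    cot θ ^ 2 = r := by
  have hsin : sin θ ^ 2 ≠ 0 := pow_ne_zero 2 (sin_ne_zero_of_cos_sq_eq_mul_sin_sq h)
  rw [cot_eq_cos_div_sin, div_pow, h, mul_div_cancel_right₀ r hsin]

lemma cot_mul_sin {θ : ℝ} (h : sin θ ≠ 0) : cot θ * sin θ = cos θ := by
  rw [cot_eq_cos_div_sin, div_mul_cancel₀ _ h]

/-- The Bloch vector of the probe state that maximally entangles the system state `s` at time `t`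
when the squared cotangents of the angles `2 * cᵢ * t` agree. It is meaningful only where the
sines of these angles do not vanish, `cot` being `0` where they do. -/
def cotProbe (cx cy cz t : ℝ) (s : Fin 3 → ℝ) : EuclideanSpace ℝ (Fin 3) :=
  !₂[-(cot (2 * cy * t) * cot (2 * cz * t) * s 0),
    -(cot (2 * cx * t) * cot (2 * cz * t) * s 1),
    -(cot (2 * cx * t) * cot (2 * cy * t) * s 2)]

section

variable {cx cy cz t : ℝ}

lemma norm_cotProbe {r : ℝ} (hx : cot (2 * cx * t) ^ 2 = r) (hy : cot (2 * cy * t) ^ 2 = r)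
    (hz : cot (2 * cz * t) ^ 2 = r) (s : EuclideanSpace ℝ (Fin 3)) :
    ‖cotProbe cx cy cz t s‖ = r * ‖s‖ := by
  have hr : 0 ≤ r := hx ▸ sq_nonneg _
  rw [← sq_eq_sq₀ (norm_nonneg _) (mul_nonneg hr (norm_nonneg s)), mul_pow,
    EuclideanSpace.real_norm_sq_eq, EuclideanSpace.real_norm_sq_eq, Fin.sum_univ_three,
    Fin.sum_univ_three]
  simp only [cotProbe, cons_val_zero, cons_val_one, cons_val, neg_sq, mul_pow, hx, hy, hz]
  ring

lemma Amat_mulVec_cotProbe_add_avec (hx : sin (2 * cx * t) ≠ 0) (hy : sin (2 * cy * t) ≠ 0)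
    (hz : sin (2 * cz * t) ≠ 0) (s : Fin 3 → ℝ) :
    (Amat cx cy cz t s).mulVec (cotProbe cx cy cz t s) + avec cx cy cz t s =
      ![sin (2 * cy * t) * sin (2 * cz * t) * s 1 * s 2 * cot (2 * cx * t) *
          (cot (2 * cz * t) ^ 2 - cot (2 * cy * t) ^ 2),
        sin (2 * cx * t) * sin (2 * cz * t) * s 0 * s 2 * cot (2 * cy * t) *
          (cot (2 * cx * t) ^ 2 - cot (2 * cz * t) ^ 2),
        sin (2 * cx * t) * sin (2 * cy * t) * s 0 * s 1 * cot (2 * cz * t) *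
          (cot (2 * cy * t) ^ 2 - cot (2 * cx * t) ^ 2)] := by
  simp only [Amat, avec, cotProbe, ← cot_mul_sin hx, ← cot_mul_sin hy, ← cot_mul_sin hz]
  ext i
  fin_cases i <;>
  · simp only [Pi.add_apply, mulVec, vec3_dotProduct, of_apply, cons_val_zero, cons_val_one,
      cons_val, Fin.zero_eta, Fin.mk_one, Fin.reduceFinMk]
    ring

end

theorem perfect_entangler_sufficiency_general (cx cy cz t r : ℝ)
    (hx : cos (2 * cx * t) ^ 2 = r * sin (2 * cx * t) ^ 2)
    (hy : cos (2 * cy * t) ^ 2 = r * sin (2 * cy * t) ^ 2)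
    (hz : cos (2 * cz * t) ^ 2 = r * sin (2 * cz * t) ^ 2) (s₀ : EuclideanSpace ℝ (Fin 3)) :
    ∃ p : EuclideanSpace ℝ (Fin 3), ‖p‖ = r * ‖s₀‖ ∧
      (Amat cx cy cz t s₀).mulVec p + avec cx cy cz t s₀ = 0 := by
  have hκx := cot_sq_eq_of_cos_sq_eq_mul_sin_sq hx
  have hκy := cot_sq_eq_of_cos_sq_eq_mul_sin_sq hy
  have hκz := cot_sq_eq_of_cos_sq_eq_mul_sin_sq hz
  refine ⟨cotProbe cx cy cz t s₀, norm_cotProbe hκx hκy hκz s₀, ?_⟩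
  rw [Amat_mulVec_cotProbe_add_avec (sin_ne_zero_of_cos_sq_eq_mul_sin_sq hx)
    (sin_ne_zero_of_cos_sq_eq_mul_sin_sq hy) (sin_ne_zero_of_cos_sq_eq_mul_sin_sq hz)]
  simp [hκx, hκy, hκz]

/-- Lemma 3, sufficiency: if each of `cₓ, c_y, c_z` is an odd
integer multiple of `π/8`, then at time `t = 1` every pure system state can be
maximally entangled using a suitable pure probe state. -/
theorem perfect_entangler_sufficiency (cx cy cz : ℝ)
    (hx : ∃ k : ℤ, cx = (2 * (k:ℝ) + 1) * π / 8)
    (hy : ∃ k : ℤ, cy = (2 * (k:ℝ) + 1) * π / 8)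
    (hz : ∃ k : ℤ, cz = (2 * (k:ℝ) + 1) * π / 8) :
    ∀ s₀ : EuclideanSpace ℝ (Fin 3), ‖s₀‖ = 1 →
      ∃ p : EuclideanSpace ℝ (Fin 3), ‖p‖ = 1 ∧
        (Amat cx cy cz 1 s₀).mulVec p + avec cx cy cz 1 s₀ = 0 := by
  intro s₀ hs₀
  simpa [hs₀] using perfect_entangler_sufficiency_general cx cy cz 1 1
    (by simpa using cos_sq_eq_sin_sq_of_eq_odd_mul_pi_div_eight hx)
    (by simpa using cos_sq_eq_sin_sq_of_eq_odd_mul_pi_div_eight hy)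
    (by simpa using cos_sq_eq_sin_sq_of_eq_odd_mul_pi_div_eight hz) s₀
end
end

section
/- The following are equivalent: (i) the odd-ratio condition holds, i.e. c_x, c_y, c_z are all nonzero and there exist integers k₁, k₂, k₃ with c_x·(2k₂+1) = c_y·(2k₁+1) and c_x·(2k₃+1) = c_z·(2k₁+1); (ii) there exists t > 0 such that for every s₀ ∈ ℝ³ with ‖s₀‖ = 1 there exists p ∈ ℝ³ with ‖p‖ = 1 satisfying A(t,s₀)·p + a(t,s₀) = 0 (i.e. the time-t evolution is a perfect entangler for every pure initial state of the system). -/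
open Matrix Real

noncomputable section

/-!
Everything depends only on the sines `S i` and cosines `C i` of the angles `2 * c i * t`, and is
cyclically symmetric in `x`, `y`, `z` (indices mod 3). For `s₀` the `i`-th axis, two of the three
equations say, up to factors `S (i + 1)` and `S (i + 2)`, that a rotation kills the other two
coordinates of `p`, so a unit solution `p` forces
`S (i + 1) ^ 2 * S (i + 2) ^ 2 = C (i + 1) ^ 2 * C (i + 2) ^ 2`, that is,
`C (i + 1) ^ 2 = S (i + 2) ^ 2`. The three axes together give `S i ^ 2 = C i ^ 2` for every `i`.
Conversely, if `S i = σ i * C i` with signs `σ i`, then `p i = -(σ (i + 1) * σ (i + 2) * s₀ i)`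
works for every `s₀`. Finally, `S i ^ 2 = C i ^ 2` says that `2 * c i * t` is an odd multiple of
`π / 4`, and a common such `t` exists exactly when the `c i` are in odd ratios.
-/

section Algebra

variable {R : Type*} [CommRing R]

/-- The `i`-th coordinate of `A(t, s) p + a(t, s)`, written in terms of `S i = sin (2 c_i t)` and
`C i = cos (2 c_i t)`. Indices are read mod 3, which makes the cyclic symmetry in `x`, `y`, `z`
explicit. -/
def blochCoord (S C s p : Fin 3 → R) (i : Fin 3) : R :=
  S (i + 1) * S (i + 2) * p i - s (i + 2) * S (i + 1) * C (i + 2) * p (i + 1) +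
    s (i + 1) * C (i + 1) * S (i + 2) * p (i + 2) + s i * C (i + 1) * C (i + 2)

lemma fin_three_cyclic_add (i : Fin 3) :
    i + 1 + 1 = i + 2 ∧ i + 1 + 2 = i ∧ i + 2 + 1 = i ∧ i + 2 + 2 = i + 1 := by
  decide +revert

lemma sum_fin_three_cyclic {M : Type*} [AddCommMonoid M] (f : Fin 3 → M) (i : Fin 3) :
    ∑ j, f j = f i + f (i + 1) + f (i + 2) := by
  rw [← Equiv.sum_comp (Equiv.addLeft i), Fin.sum_univ_three]
  simp only [Equiv.coe_addLeft, add_zero]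

variable {S C : Fin 3 → R}

section SingleAxis

variable (S C) (p : Fin 3 → R) (i : Fin 3)

lemma single_one_cyclic :
    (Pi.single i 1 : Fin 3 → R) (i + 1) = 0 ∧ (Pi.single i 1 : Fin 3 → R) (i + 2) = 0 :=
  ⟨Pi.single_eq_of_ne (by simp) _, Pi.single_eq_of_ne (by simp) _⟩

lemma blochCoord_single_self : blochCoord S C (Pi.single i 1) p i =
    S (i + 1) * S (i + 2) * p i + C (i + 1) * C (i + 2) := by
  obtain ⟨hs₁, hs₂⟩ := single_one_cyclic (R := R) i
  simp only [blochCoord, hs₁, hs₂, Pi.single_eq_same]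
  ring

lemma blochCoord_single_add_one : blochCoord S C (Pi.single i 1) p (i + 1) =
    S (i + 2) * (S i * p (i + 1) - C i * p (i + 2)) := by
  obtain ⟨hs₁, hs₂⟩ := single_one_cyclic (R := R) i
  obtain ⟨h11, h12, -, -⟩ := fin_three_cyclic_add i
  simp only [blochCoord, h11, h12, hs₁, hs₂, Pi.single_eq_same]
  ring

lemma blochCoord_single_add_two : blochCoord S C (Pi.single i 1) p (i + 2) =
    S (i + 1) * (C i * p (i + 1) + S i * p (i + 2)) := by
  obtain ⟨hs₁, hs₂⟩ := single_one_cyclic (R := R) i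
  obtain ⟨-, -, h21, h22⟩ := fin_three_cyclic_add i
  simp only [blochCoord, h21, h22, hs₁, hs₂, Pi.single_eq_same]
  ring

end SingleAxis

lemma cos_sq_eq_sin_sq_of_blochCoord_single (hSC : ∀ i, S i ^ 2 + C i ^ 2 = 1) {p : Fin 3 → R}
    (hp : ∑ j, p j ^ 2 = 1) (i : Fin 3) (h : blochCoord S C (Pi.single i 1) p = 0) :
    C (i + 1) ^ 2 = S (i + 2) ^ 2 := by
  have row₀ := (blochCoord_single_self S C p i).symm.trans (congrFun h i)
  have row₁ := (blochCoord_single_add_one S C p i).symm.trans (congrFun h (i + 1))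
  have row₂ := (blochCoord_single_add_two S C p i).symm.trans (congrFun h (i + 2))
  rw [Pi.zero_apply] at row₀ row₁ row₂
  rw [sum_fin_three_cyclic _ i] at hp
  have hparallel : S (i + 1) ^ 2 * S (i + 2) ^ 2 * p i ^ 2 = C (i + 1) ^ 2 * C (i + 2) ^ 2 := by
    linear_combination (S (i + 1) * S (i + 2) * p i - C (i + 1) * C (i + 2)) * row₀
  have hortho : S (i + 1) ^ 2 * S (i + 2) ^ 2 * (p (i + 1) ^ 2 + p (i + 2) ^ 2) = 0 := by
    -- `(S i * q - C i * r) ^ 2 + (C i * q + S i * r) ^ 2 = q ^ 2 + r ^ 2`: rotations are isometries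
    linear_combination S (i + 1) ^ 2 * S (i + 2) * (S i * p (i + 1) - C i * p (i + 2)) * row₁ +
      S (i + 2) ^ 2 * S (i + 1) * (C i * p (i + 1) + S i * p (i + 2)) * row₂ -
      S (i + 1) ^ 2 * S (i + 2) ^ 2 * (p (i + 1) ^ 2 + p (i + 2) ^ 2) * hSC i
  have hprod : S (i + 1) ^ 2 * S (i + 2) ^ 2 = C (i + 1) ^ 2 * C (i + 2) ^ 2 := by
    linear_combination hparallel + hortho - S (i + 1) ^ 2 * S (i + 2) ^ 2 * hp
  linear_combination S (i + 2) ^ 2 * hSC (i + 1) - C (i + 1) ^ 2 * hSC (i + 2) - hprod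

lemma exists_blochCoord_eq_zero {σ : Fin 3 → R} (hσ : ∀ i, σ i ^ 2 = 1)
    (hS : ∀ i, S i = σ i * C i) (s : Fin 3 → R) :
    ∃ p : Fin 3 → R, ∑ i, p i ^ 2 = ∑ i, s i ^ 2 ∧ blochCoord S C s p = 0 := by
  refine ⟨fun i ↦ -(σ (i + 1) * σ (i + 2) * s i), ?_, ?_⟩
  · simp only [neg_sq, mul_pow, hσ, one_mul]
  · funext i
    obtain ⟨h11, h12, h21, h22⟩ := fin_three_cyclic_add i
    simp only [blochCoord, hS, h11, h12, h21, h22, Pi.zero_apply]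
    linear_combination
      -(C (i + 1) * C (i + 2) * s i) * (σ (i + 2) ^ 2 * hσ (i + 1) + hσ (i + 2))

lemma sin_sq_eq_cos_sq_of_cyclic (hSC : ∀ i, S i ^ 2 + C i ^ 2 = 1)
    (hCS : ∀ i, C (i + 1) ^ 2 = S (i + 2) ^ 2) (i : Fin 3) : S i ^ 2 = C i ^ 2 := by
  obtain ⟨h11, h12, h21, h22⟩ := fin_three_cyclic_add i
  calc S i ^ 2 = C (i + 2) ^ 2 := by rw [← h11, hCS, h12]
    _ = 1 - S (i + 2) ^ 2 := eq_sub_of_add_eq' (hSC _)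
    _ = 1 - C (i + 1) ^ 2 := by rw [hCS]
    _ = S (i + 1) ^ 2 := (eq_sub_of_add_eq (hSC _)).symm
    _ = C i ^ 2 := by rw [← h22, ← hCS, h21]

theorem forall_exists_blochCoord_eq_zero_iff [NoZeroDivisors R]
    (hSC : ∀ i, S i ^ 2 + C i ^ 2 = 1) :
    (∀ s : Fin 3 → R, ∑ i, s i ^ 2 = 1 → ∃ p : Fin 3 → R, ∑ i, p i ^ 2 = 1 ∧
      blochCoord S C s p = 0) ↔ ∀ i, S i ^ 2 = C i ^ 2 := by
  constructor
  · intro h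
    refine sin_sq_eq_cos_sq_of_cyclic hSC fun i ↦ ?_
    obtain ⟨p, hp, hzero⟩ := h (Pi.single i 1) (by simp [Pi.single_apply])
    exact cos_sq_eq_sin_sq_of_blochCoord_single hSC hp i hzero
  · intro h s hs
    have hsign (i : Fin 3) : ∃ σ : R, σ ^ 2 = 1 ∧ S i = σ * C i := by
      rcases sq_eq_sq_iff_eq_or_eq_neg.mp (h i) with hi | hi
      · exact ⟨1, one_pow 2, by rw [hi, one_mul]⟩
      · exact ⟨-1, neg_one_sq, by rw [hi, neg_one_mul]⟩
    choose σ hσ hS using hsign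
    simpa only [hs] using exists_blochCoord_eq_zero hσ hS s

end Algebra

section OddMultiples

lemma two_mul_intCast_add_one_ne_zero {K : Type*} [Ring K] [CharZero K] (k : ℤ) :
    (2 * k + 1 : K) ≠ 0 := by
  exact_mod_cast (by lia : 2 * k + 1 ≠ 0)

/-- `x` is an odd integer multiple of `r`. -/
def IsOddMultiple {K : Type*} [Ring K] (r x : K) : Prop := ∃ k : ℤ, x = (2 * k + 1) * r

lemma IsOddMultiple.neg {K : Type*} [Ring K] {r x : K} (h : IsOddMultiple r x) :
    IsOddMultiple r (-x) := by
  obtain ⟨k, rfl⟩ := h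
  exact ⟨-k - 1, by push_cast; noncomm_ring⟩

lemma exists_ne_zero_isOddMultiple_iff {ι K : Type*} [Field K] [CharZero K] (c : ι → K)
    (i₀ : ι) {r : K} (hr : r ≠ 0) :
    (∃ t ≠ 0, ∀ i, IsOddMultiple r (c i * t)) ↔
      c i₀ ≠ 0 ∧ ∃ k : ι → ℤ, ∀ i, c i₀ * (2 * k i + 1) = c i * (2 * k i₀ + 1) := by
  constructor
  · rintro ⟨t, -, ht⟩
    choose k hk using ht
    refine ⟨?_, k, fun i ↦ mul_right_cancel₀ hr ?_⟩
    · refine left_ne_zero_of_mul (b := t) ?_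
      rw [hk]
      exact mul_ne_zero (two_mul_intCast_add_one_ne_zero _) hr
    · linear_combination c i * hk i₀ - c i₀ * hk i
  · rintro ⟨hc, k, hk⟩
    refine ⟨(2 * k i₀ + 1) * r / c i₀,
      div_ne_zero (mul_ne_zero (two_mul_intCast_add_one_ne_zero _) hr) hc, fun i ↦ ⟨k i, ?_⟩⟩
    field_simp
    linear_combination -hk i

lemma exists_pos_isOddMultiple_iff {ι K : Type*} [Ring K] [LinearOrder K]
    [IsOrderedRing K] (c : ι → K) (r : K) :
    (∃ t > 0, ∀ i, IsOddMultiple r (c i * t)) ↔ ∃ t ≠ 0, ∀ i, IsOddMultiple r (c i * t) := by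
  refine ⟨fun ⟨t, ht, h⟩ ↦ ⟨t, ht.ne', h⟩, fun ⟨t, ht, h⟩ ↦ ?_⟩
  rcases ht.lt_or_gt with hneg | hpos
  · exact ⟨-t, neg_pos.mpr hneg, fun i ↦ by simpa only [mul_neg] using (h i).neg⟩
  · exact ⟨t, hpos, h⟩

end OddMultiples

lemma oddRatio_iff (c : Fin 3 → ℝ) :
    OddRatio (c 0) (c 1) (c 2) ↔
      c 0 ≠ 0 ∧ ∃ k : Fin 3 → ℤ, ∀ i, c 0 * (2 * k i + 1) = c i * (2 * k 0 + 1) := by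
  constructor
  · rintro ⟨h₀, -, -, k₀, k₁, k₂, h₁, h₂⟩
    refine ⟨h₀, ![k₀, k₁, k₂], Fin.forall_fin_succ.mpr ⟨rfl, ?_⟩⟩
    simpa [Fin.forall_fin_two] using ⟨h₁, h₂⟩
  · rintro ⟨h₀, k, hk⟩
    have hne (i : Fin 3) : c i ≠ 0 := by
      refine left_ne_zero_of_mul (b := (2 * k 0 + 1 : ℝ)) ?_
      rw [← hk]
      exact mul_ne_zero h₀ (two_mul_intCast_add_one_ne_zero _)
    exact ⟨h₀, hne 1, hne 2, k 0, k 1, k 2, hk 1, hk 2⟩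

lemma sin_sq_eq_cos_sq_iff (x : ℝ) :
    sin x ^ 2 = cos x ^ 2 ↔ IsOddMultiple (π / 4) x := by
  rw [eq_comm, ← sub_eq_zero, ← cos_two_mul', cos_eq_zero_iff]
  refine exists_congr fun k ↦ ⟨fun h ↦ ?_, fun h ↦ ?_⟩ <;> linarith

theorem oddRatio_iff_exists_sin_sq_eq_cos_sq (c : Fin 3 → ℝ) :
    OddRatio (c 0) (c 1) (c 2) ↔
      ∃ t > 0, ∀ i, sin (2 * c i * t) ^ 2 = cos (2 * c i * t) ^ 2 := by
  have hπ : π / 4 ≠ 0 := div_ne_zero pi_ne_zero four_ne_zero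
  simp only [sin_sq_eq_cos_sq_iff]
  rw [exists_pos_isOddMultiple_iff (2 * c ·), exists_ne_zero_isOddMultiple_iff (2 * c ·) 0 hπ,
    oddRatio_iff]
  simp only [mul_assoc, mul_ne_zero_iff, mul_right_inj' (two_ne_zero' ℝ), ne_eq,
    OfNat.ofNat_ne_zero, not_false_eq_true, true_and]

lemma mulVec_Amat_add_avec (c : Fin 3 → ℝ) (t : ℝ) (s p : Fin 3 → ℝ) :
    Amat (c 0) (c 1) (c 2) t s *ᵥ p + avec (c 0) (c 1) (c 2) t s =
      blochCoord (fun i ↦ sin (2 * c i * t)) (fun i ↦ cos (2 * c i * t)) s p := by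
  funext i
  fin_cases i <;>
    simp [Amat, avec, blochCoord, dotProduct, Fin.sum_univ_three] <;> ring

theorem perfect_entangler_iff_sin_sq_eq_cos_sq (c : Fin 3 → ℝ) (t : ℝ) :
    (∀ s₀ : EuclideanSpace ℝ (Fin 3), ‖s₀‖ = 1 → ∃ p : EuclideanSpace ℝ (Fin 3), ‖p‖ = 1 ∧
      Amat (c 0) (c 1) (c 2) t s₀ *ᵥ p + avec (c 0) (c 1) (c 2) t s₀ = 0) ↔
      ∀ i, sin (2 * c i * t) ^ 2 = cos (2 * c i * t) ^ 2 := by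
  rw [← forall_exists_blochCoord_eq_zero_iff fun i ↦ sin_sq_add_cos_sq _]
  simp only [(WithLp.toLp_surjective 2).forall, (WithLp.toLp_surjective 2).exists,
    EuclideanSpace.norm_eq, Real.sqrt_eq_one, Real.norm_eq_abs, sq_abs, mulVec_Amat_add_avec]

/-- Theorem 3: the odd-ratio condition holds iff some time-`t`
evolution (`t > 0`) is a perfect entangler for every pure initial state of the
system: every unit Bloch vector `s₀` can be sent to `0` using a pure probe state. -/
theorem oddRatio_iff_perfect_entangler (cx cy cz : ℝ) :
    OddRatio cx cy cz ↔
    ∃ t > (0:ℝ), ∀ s₀ : EuclideanSpace ℝ (Fin 3), ‖s₀‖ = 1 →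
      ∃ p : EuclideanSpace ℝ (Fin 3), ‖p‖ = 1 ∧
        (Amat cx cy cz t s₀).mulVec p + avec cx cy cz t s₀ = 0 := by
  let c : Fin 3 → ℝ := ![cx, cy, cz]
  calc OddRatio cx cy cz
      ↔ ∃ t > 0, ∀ i, sin (2 * c i * t) ^ 2 = cos (2 * c i * t) ^ 2 :=
        oddRatio_iff_exists_sin_sq_eq_cos_sq c
    _ ↔ _ := exists_congr fun t ↦ and_congr_right fun _ ↦
      (perfect_entangler_iff_sin_sq_eq_cos_sq c t).symm
end
end

section
/- Let c_x = 1 and c_y = c_z = 0 (Ising interaction Hamiltonian H_I = σx⊗σx). Then for every s₀ = (s_x, s_y, s_z) ∈ ℝ³ with ‖s₀‖ ≤ 1, the reachable set satisfies R(s₀) = { r = (r_x, r_y, r_z) ∈ ℝ³ : r_x = s_x and r_y² + r_z² ≤ s_y² + s_z² }. -/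
open Matrix Real

noncomputable section

/-!
Only the `x`-coordinate of `p` enters the dynamics with `c_y = c_z = 0`. Writing `q` for its
negative and regarding the `yz`-plane as `ℂ`, the dynamics fixes `s_x` and multiplies `s_y + i s_z`
by `cos (2 c_x t) + i q sin (2 c_x t)`. If `c_x ≠ 0`, then as `t ≥ 0` and `q ∈ [-1, 1]` vary, this
factor fills the closed unit disc: its real part takes every value in `[-1, 1]`, and the vertical
chord of the disc over `cos θ` is exactly `{q sin θ : |q| ≤ 1}`. Finally, the multiples of a
complex number `z` by elements of the closed unit disc form the closed disc of radius `|z|`.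
-/

theorem norm_le_norm_iff_exists_mul {𝕜 : Type*} [NormedDivisionRing 𝕜] {w z : 𝕜} :
    ‖w‖ ≤ ‖z‖ ↔ ∃ u : 𝕜, ‖u‖ ≤ 1 ∧ u * z = w := by
  constructor
  · intro h
    refine ⟨w / z, ?_, div_mul_cancel_of_imp fun hz => ?_⟩
    · rw [norm_div]
      exact div_le_one_of_le₀ h (norm_nonneg z)
    · simpa [hz] using h
  · rintro ⟨u, hu, rfl⟩
    rw [norm_mul]
    exact mul_le_of_le_one_left (norm_nonneg z) hu

theorem exists_nonneg_cos_mul_eq {ω x : ℝ} (hω : ω ≠ 0) (hx : |x| ≤ 1) :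
    ∃ t ≥ 0, cos (ω * t) = x := by
  obtain ⟨hx₁, hx₂⟩ := abs_le.mp hx
  refine ⟨arccos x / |ω|, div_nonneg (arccos_nonneg x) (abs_nonneg ω), ?_⟩
  calc cos (ω * (arccos x / |ω|))
      = cos |ω * (arccos x / |ω|)| := (cos_abs _).symm
    _ = cos (arccos x) := by
      rw [abs_mul, abs_div, abs_abs, abs_of_nonneg (arccos_nonneg x),
        mul_div_cancel₀ _ (abs_ne_zero.mpr hω)]
    _ = x := cos_arccos hx₁ hx₂

theorem norm_mk_cos_le_one_iff {θ y : ℝ} : ‖(⟨cos θ, y⟩ : ℂ)‖ ≤ 1 ↔ ‖y‖ ≤ ‖sin θ‖ := by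
  rw [← sq_le_one_iff₀ (norm_nonneg _), Complex.sq_norm, Complex.normSq_mk, ← sq, ← sq,
    Real.norm_eq_abs, Real.norm_eq_abs, ← sq_le_sq, sin_sq, le_sub_iff_add_le']

theorem norm_le_one_iff_exists_cos_sin {ω : ℝ} (hω : ω ≠ 0) {z : ℂ} :
    ‖z‖ ≤ 1 ↔ ∃ t ≥ 0, ∃ q : ℝ, |q| ≤ 1 ∧ z = ⟨cos (ω * t), q * sin (ω * t)⟩ := by
  constructor
  · obtain ⟨x, y⟩ := z
    intro hz
    obtain ⟨t, ht, rfl⟩ := exists_nonneg_cos_mul_eq hω ((Complex.abs_re_le_norm _).trans hz)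
    obtain ⟨q, hq, rfl⟩ := norm_le_norm_iff_exists_mul.mp (norm_mk_cos_le_one_iff.mp hz)
    exact ⟨t, ht, q, hq, rfl⟩
  · rintro ⟨t, -, q, hq, rfl⟩
    exact norm_mk_cos_le_one_iff.mpr (norm_le_norm_iff_exists_mul.mpr ⟨q, hq, rfl⟩)

/-- The component of a Bloch vector orthogonal to the `x`-axis, as the complex number
`r_y + i r_z`; the Ising dynamics acts on it by complex multiplication. -/
def transverse (r : EuclideanSpace ℝ (Fin 3)) : ℂ :=
  ⟨r 1, r 2⟩

theorem norm_transverse_le_iff {r s : EuclideanSpace ℝ (Fin 3)} :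
    ‖transverse r‖ ≤ ‖transverse s‖ ↔ r 1 ^ 2 + r 2 ^ 2 ≤ s 1 ^ 2 + s 2 ^ 2 := by
  rw [← sq_le_sq₀ (norm_nonneg _) (norm_nonneg _), Complex.sq_norm, Complex.sq_norm]
  simp only [transverse, Complex.normSq_mk, sq]

theorem Amat_mulVec_add_avec_ising (c t : ℝ) (s p : Fin 3 → ℝ) :
    Amat c 0 0 t s *ᵥ p + avec c 0 0 t s =
      ![s 0,
        cos (2 * c * t) * s 1 + p 0 * sin (2 * c * t) * s 2,
        cos (2 * c * t) * s 2 - p 0 * sin (2 * c * t) * s 1] := by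
  ext i
  fin_cases i <;> simp [Amat, avec, dotProduct, Fin.sum_univ_three] <;> ring

theorem Amat_mulVec_add_avec_ising_eq_iff (c t : ℝ) (s p r : EuclideanSpace ℝ (Fin 3)) :
    Amat c 0 0 t s *ᵥ p + avec c 0 0 t s = r ↔
      r 0 = s 0 ∧
        (⟨cos (2 * c * t), -p 0 * sin (2 * c * t)⟩ : ℂ) * transverse s = transverse r := by
  rw [Amat_mulVec_add_avec_ising, funext_iff, Fin.forall_fin_succ, Fin.forall_fin_two,
    Complex.ext_iff]
  simp [transverse, eq_comm, sub_eq_add_neg]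

theorem mem_reach_ising_iff {c : ℝ} {s r : EuclideanSpace ℝ (Fin 3)} :
    r ∈ reach c 0 0 s ↔ r 0 = s 0 ∧ ∃ t ≥ 0, ∃ q : ℝ, |q| ≤ 1 ∧
      (⟨cos (2 * c * t), q * sin (2 * c * t)⟩ : ℂ) * transverse s = transverse r := by
  constructor
  · rintro ⟨t, ht, p, hp, hr⟩
    obtain ⟨hx, hyz⟩ := (Amat_mulVec_add_avec_ising_eq_iff c t s p r).mp hr
    have hp₀ : |-p 0| ≤ 1 := (abs_neg (p 0)).trans_le ((PiLp.norm_apply_le p 0).trans hp)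
    exact ⟨hx, t, ht, -p 0, hp₀, hyz⟩
  · rintro ⟨hx, t, ht, q, hq, hyz⟩
    refine ⟨t, ht, EuclideanSpace.single 0 (-q), by simpa using hq, ?_⟩
    exact (Amat_mulVec_add_avec_ising_eq_iff c t s _ r).mpr ⟨hx, by simpa using hyz⟩

theorem reach_ising_general {c : ℝ} (hc : c ≠ 0) (s₀ : EuclideanSpace ℝ (Fin 3)) :
    reach c 0 0 s₀ =
      {r : EuclideanSpace ℝ (Fin 3) |
        r 0 = s₀ 0 ∧ (r 1)^2 + (r 2)^2 ≤ (s₀ 1)^2 + (s₀ 2)^2} := by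
  ext r
  rw [mem_reach_ising_iff, Set.mem_ofPred_eq, ← norm_transverse_le_iff, norm_le_norm_iff_exists_mul]
  refine and_congr_right fun _ => ?_
  simp only [norm_le_one_iff_exists_cos_sin (mul_ne_zero two_ne_zero hc)]
  constructor
  · rintro ⟨t, ht, q, hq, hr⟩
    exact ⟨_, ⟨t, ht, q, hq, rfl⟩, hr⟩
  · rintro ⟨_, ⟨t, ht, q, hq, rfl⟩, hr⟩
    exact ⟨t, ht, q, hq, hr⟩

/-- Ising Hamiltonian, `cₓ = 1`, `c_y = c_z = 0`: the reachable set
from `s₀` is the circle-slice `{r : r_x = s_x, r_y² + r_z² ≤ s_y² + s_z²}`. -/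
theorem reach_ising (s₀ : EuclideanSpace ℝ (Fin 3)) (hs : ‖s₀‖ ≤ 1) :
    reach 1 0 0 s₀ =
      {r : EuclideanSpace ℝ (Fin 3) |
        r 0 = s₀ 0 ∧ (r 1)^2 + (r 2)^2 ≤ (s₀ 1)^2 + (s₀ 2)^2} :=
  reach_ising_general one_ne_zero s₀
end
end
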